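/- arXiv:1611.06611 — 3 statements merged into one kernel-verified Lean document; each statement's English description precedes it below -/
import Mathlib

section
/- Let V be a vertex operator algebra over an algebraically closed field F with char F ≠ 2, n a nonnegative integer, M a weak V-module, a, b ∈ V homogeneous, and t ≥ s ≥ 0 integers. Then the operator o(a∘_{n,t}^s b), restricted to Ω_n(M), equals Σ_{i≥0} C(−2n−t−2, i)(−1)^i a_{deg a+s−n−2−t+i} b_{deg b+n−s+i+t} − Σ_{i≥0} C(−2n−t−2, i)(−1)^{2n+2+t+i} b_{deg b−n−s−2−i} a_{deg a+n+s+i}, and hence o(a∘_{n,t}^s b) = 0 on Ω_n(M). -/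
/-!
The Borcherds identity, taken with `p = deg a + n + s`, `r = -(2n + 2 + t)` and
`q = deg b + n + t - s`, has the zero mode `o(a ∘_{n,t}^s b)` as its left-hand side: the vector
`a_{r+i} b` has degree `deg a + deg b - r - i - 1`, so its zero mode is its component of index
`p + q - i`. On the right-hand side the operators acting first on `w` are `b_{q+i}` and `a_{p+i}`
with `i ≥ 0`. Since `t ≥ s` and `s ≥ 0`, these indices are at least `deg b + n` and `deg a + n`,
so both operators kill `w ∈ Ω_n(M)`. For the same reason every term of the explicit expression
vanishes, and both claims reduce to `o(a ∘_{n,t}^s b) w = 0`.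

The identification of the left-hand side uses that `o` is additive and equals `v ↦ v_{deg v - 1}`
on homogeneous vectors (`WeakMod.op_of_mem`), and that only finitely many `a_{r+i} b` are nonzero.
-/

/-!
Common definitions: vertex operator algebras over a field `F`, weak modules,
`ℤ₊`-graded modules, the subspaces `O_n(V)`, the products `*_n`, and the
spaces `Ω_n(M)`, following Li Ren, "Modular `A_n(V)` theory".
-/

universe u v w

/-- The data and axioms of a vertex operator algebra over a field `F`.

`coeff u k` is the operator `u_k` (the coefficient of `z^{-k-1}` in `Y(u,z)`),
`vac` is the vacuum vector `1`, `omg` is the Virasoro vector `ω`, `cc` is the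
central charge, `deg d` is the homogeneous subspace `V_d`, and `proj d` is the
projection onto `V_d` coming from the direct sum decomposition `V = ⊕_d V_d`.
The Jacobi identity is imposed in its equivalent component (Borcherds identity)
form, and the Virasoro relation is stated multiplied by `2` (using
`binomial(m+1,3) = (m³-m)/6`), which is equivalent to the usual relation since
`char F ≠ 2`. -/
structure VOA (F : Type u) (V : Type v) [Field F] [AddCommGroup V] [Module F V] where
  coeff : V → ℤ → V →ₗ[F] V
  coeff_add : ∀ (u v : V) (k : ℤ), coeff (u + v) k = coeff u k + coeff v k
  coeff_smul : ∀ (c : F) (u : V) (k : ℤ), coeff (c • u) k = c • coeff u k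
  vac : V
  omg : V
  cc : F
  deg : ℤ → Submodule F V
  proj : ℤ → V →ₗ[F] V
  proj_mem : ∀ (d : ℤ) (a : V), proj d a ∈ deg d
  proj_of_mem : ∀ (d : ℤ) (a : V), a ∈ deg d → proj d a = a
  proj_of_mem_ne : ∀ (d e : ℤ) (a : V), a ∈ deg e → d ≠ e → proj d a = 0
  proj_finite : ∀ a : V, (Function.support fun d : ℤ => proj d a).Finite
  proj_sum : ∀ a : V, (∑ᶠ d : ℤ, proj d a) = a
  deg_fd : ∀ d : ℤ, FiniteDimensional F (deg d)
  deg_bdd : ∃ N : ℤ, ∀ d : ℤ, d < N → deg d = ⊥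
  trunc : ∀ u a : V, ∃ N : ℤ, ∀ k : ℤ, N ≤ k → coeff u k a = 0
  vac_coeff : ∀ (k : ℤ) (a : V), coeff vac k a = if k = -1 then a else 0
  creation : ∀ (a : V) (k : ℤ), 0 ≤ k → coeff a k vac = 0
  creation_neg_one : ∀ a : V, coeff a (-1) vac = a
  vac_deg : vac ∈ deg 0
  omg_deg : omg ∈ deg 2
  deg_coeff : ∀ (s t k : ℤ) (u a : V), u ∈ deg s → a ∈ deg t →
    coeff u k a ∈ deg (s + t - k - 1)
  jacobi : ∀ (u a w : V) (p q r : ℤ),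
    (∑ᶠ i : ℕ, Ring.choose p i • coeff (coeff u (r + i) a) (p + q - i) w) =
      ∑ᶠ i : ℕ, ((-1 : ℤ) ^ i * Ring.choose r i) •
        (coeff u (p + r - i) (coeff a (q + i) w)
          - (r.negOnePow : ℤ) • coeff a (q + r - i) (coeff u (p + i) w))
  virasoro : ∀ (m k : ℤ) (a : V),
    (2 : ℤ) • (coeff omg (m + 1) (coeff omg (k + 1) a)
        - coeff omg (k + 1) (coeff omg (m + 1) a)) =
      (2 * (m - k)) • coeff omg (m + k + 1) a +
        (if m + k = 0 then (Ring.choose (m + 1) 3 : ℤ) • (cc • a) else 0)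
  L_neg_one_deriv : ∀ (u : V) (k : ℤ),
    coeff (coeff omg 0 u) k = (-k : ℤ) • coeff u (k - 1)
  L_zero : ∀ (d : ℤ) (a : V), a ∈ deg d → coeff omg 1 a = (d : ℤ) • a

namespace VOA

variable {F : Type u} {V : Type v} [Field F] [AddCommGroup V] [Module F V]

/-- `res voa a e b k = Res_z Y(a,z)b (1+z)^e / z^k = Σ_{j≥0} binom(e,j) a_{j-k} b`. -/
noncomputable def res (voa : VOA F V) (a : V) (e : ℤ) (b : V) (k : ℤ) : V :=
  ∑ᶠ j : ℕ, Ring.choose e j • voa.coeff a ((j : ℤ) - k) b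

/-- the circle product `a ∘_{n,t}^s b = Res_z Y(a,z)b (1+z)^{deg a+n+s}/z^{2n+2+t}`,
for `a` homogeneous of degree `d`. -/
noncomputable def circ (voa : VOA F V) (a : V) (d : ℤ) (b : V) (n : ℕ) (s t : ℤ) : V :=
  voa.res a (d + n + s) b (2 * n + 2 + t)

/-- `O_n(V)`: the span of all `a ∘_{n,t}^s b` for homogeneous `a`, `s ≤ t`, together
with all `L(-1)a + L(0)a`. -/
noncomputable def On (voa : VOA F V) (n : ℕ) : Submodule F V :=
  Submodule.span F
    ({x : V | ∃ (d : ℤ) (a b : V) (s t : ℤ),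
        a ∈ voa.deg d ∧ s ≤ t ∧ x = voa.circ a d b n s t} ∪
      {x : V | ∃ a : V, x = voa.coeff voa.omg 0 a + voa.coeff voa.omg 1 a})

/-- the product `a *_n b` for `a` homogeneous of degree `d`:
`a *_n b = Σ_{m=0}^n (-1)^m binom(m+n,n) Res_z Y(a,z) (1+z)^{deg a+n}/z^{n+m+1} b`. -/
noncomputable def hstar (voa : VOA F V) (n : ℕ) (a : V) (d : ℤ) (b : V) : V :=
  ∑ m ∈ Finset.range (n + 1),
    ((-1 : ℤ) ^ m * ((m + n).choose n : ℤ)) • voa.res a (d + n) b ((n : ℤ) + m + 1)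

/-- the product `a *_n b` for arbitrary `a`, extended linearly from homogeneous `a`
using the projections onto homogeneous subspaces. -/
noncomputable def star (voa : VOA F V) (n : ℕ) (a b : V) : V :=
  ∑ᶠ d : ℤ, voa.hstar n (voa.proj d a) d b

end VOA

/-- A weak module over a vertex operator algebra: `mcoeff v k` is the operator `v_k`
on `M`; the axioms are truncation, `Y_M(1,z) = Id`, and the (component form of the)
Jacobi identity. -/
structure WeakMod (F : Type u) (V : Type v) (M : Type w) [Field F] [AddCommGroup V]
    [Module F V] [AddCommGroup M] [Module F M] (voa : VOA F V) where
  mcoeff : V → ℤ → M →ₗ[F] M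
  mcoeff_add : ∀ (u v : V) (k : ℤ), mcoeff (u + v) k = mcoeff u k + mcoeff v k
  mcoeff_smul : ∀ (c : F) (u : V) (k : ℤ), mcoeff (c • u) k = c • mcoeff u k
  trunc : ∀ (u : V) (w : M), ∃ N : ℤ, ∀ k : ℤ, N ≤ k → mcoeff u k w = 0
  vac_act : ∀ (k : ℤ) (w : M), mcoeff voa.vac k w = if k = -1 then w else 0
  jacobi : ∀ (u a : V) (w : M) (p q r : ℤ),
    (∑ᶠ i : ℕ, Ring.choose p i • mcoeff (voa.coeff u (r + i) a) (p + q - i) w) =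
      ∑ᶠ i : ℕ, ((-1 : ℤ) ^ i * Ring.choose r i) •
        (mcoeff u (p + r - i) (mcoeff a (q + i) w)
          - (r.negOnePow : ℤ) • mcoeff a (q + r - i) (mcoeff u (p + i) w))

namespace WeakMod

variable {F : Type u} {V : Type v} {M : Type w} [Field F] [AddCommGroup V] [Module F V]
  [AddCommGroup M] [Module F M] {voa : VOA F V}

/-- `N` is a weak submodule: a subspace stable under all the operators `v_k`. -/
def IsSub (W : WeakMod F V M voa) (N : Submodule F M) : Prop :=
  ∀ (v : V) (k : ℤ), ∀ w ∈ N, W.mcoeff v k w ∈ N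

/-- `Ω_n(M) = {w ∈ M | u_i w = 0 for all homogeneous u and all i ≥ deg u + n}`. -/
def Omega (W : WeakMod F V M voa) (n : ℤ) : Submodule F M :=
  ⨅ (d : ℤ) (v : V) (_ : v ∈ voa.deg d) (i : ℤ) (_ : d + n ≤ i),
    LinearMap.ker (W.mcoeff v i)

/-- the zero mode `o(a) = a_{deg a - 1}`, extended linearly from homogeneous `a`. -/
noncomputable def op (W : WeakMod F V M voa) (a : V) (w : M) : M :=
  ∑ᶠ d : ℤ, W.mcoeff (voa.proj d a) (d - 1) w

/-- irreducibility of a weak module: it is nonzero and it has no weak submodules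
other than `0` and `M`. -/
def Irreducible (W : WeakMod F V M voa) : Prop :=
  (∃ w : M, w ≠ 0) ∧ ∀ N : Submodule F M, W.IsSub N → N = ⊥ ∨ N = ⊤

end WeakMod

/-- A `ℤ₊`-graded module over a vertex operator algebra: a weak module together with
a grading `M = ⊕_{m ≥ 0} M(m)` such that `v_k M(m) ⊆ M(m + deg v - k - 1)`. -/
structure GradedMod (F : Type u) (V : Type v) (M : Type w) [Field F] [AddCommGroup V]
    [Module F V] [AddCommGroup M] [Module F M] (voa : VOA F V)
    extends WeakMod F V M voa where
  gr : ℤ → Submodule F M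
  gr_neg : ∀ m : ℤ, m < 0 → gr m = ⊥
  internal : DirectSum.IsInternal gr
  gr_shift : ∀ (d : ℤ) (v : V), v ∈ voa.deg d → ∀ (m k : ℤ), ∀ w ∈ gr m,
    mcoeff v k w ∈ gr (m + d - k - 1)

/-- A bundled `ℤ₊`-graded module over a vertex operator algebra. -/
structure GradedVMod.{a, b, c} (F : Type a) (V : Type b) [Field F] [AddCommGroup V]
    [Module F V] (voa : VOA F V) where
  carrier : Type c
  [acg : AddCommGroup carrier]
  [mod : Module F carrier]
  str : GradedMod F V carrier voa

attribute [instance] GradedVMod.acg GradedVMod.mod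

/-- Rationality: every `ℤ₊`-graded module is a direct sum of irreducible graded
modules. -/
def VOA.IsRational {F : Type u} {V : Type v} [Field F] [AddCommGroup V] [Module F V]
    (voa : VOA F V) : Prop :=
  ∀ (M : Type v) [AddCommGroup M] [Module F M] (GM : GradedMod F V M voa),
    ∃ (ι : Type v) (N : ι → Submodule F M),
      (∀ i, GM.toWeakMod.IsSub (N i)) ∧
      (∀ i, N i = ⨆ m : ℤ, N i ⊓ GM.gr m) ∧
      (∀ i, N i ≠ ⊥) ∧
      (∀ i, ∀ N' : Submodule F M, GM.toWeakMod.IsSub N' → N' ≤ N i →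
        N' = ⊥ ∨ N' = N i) ∧
      iSupIndep N ∧ (⨆ i, N i) = ⊤
namespace WeakMod

variable {F : Type u} {V : Type v} {M : Type w} [Field F] [AddCommGroup V] [Module F V]
  [AddCommGroup M] [Module F M] {voa : VOA F V}

lemma mcoeff_zero (W : WeakMod F V M voa) (k : ℤ) : W.mcoeff 0 k = 0 := by
  simpa using W.mcoeff_smul 0 0 k

lemma op_support_finite (W : WeakMod F V M voa) (x : V) (w : M) :
    (Function.support fun d : ℤ => W.mcoeff (voa.proj d x) (d - 1) w).Finite := by
  refine (voa.proj_finite x).subset fun d hd h0 => hd ?_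
  have h0 : voa.proj d x = 0 := h0
  simp [h0, mcoeff_zero]

/-- The zero mode `v ↦ o(v) w`, as an additive map in `v`. -/
noncomputable def opHom (W : WeakMod F V M voa) (w : M) : V →+ M where
  toFun x := W.op x w
  map_zero' := by simp [op, mcoeff_zero]
  map_add' x y := by
    simp only [op, map_add, mcoeff_add, LinearMap.add_apply]
    exact finsum_add_distrib (W.op_support_finite x w) (W.op_support_finite y w)

lemma op_of_mem (W : WeakMod F V M voa) {e : ℤ} {x : V} (hx : x ∈ voa.deg e) (w : M) :
    W.op x w = W.mcoeff x (e - 1) w := by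
  unfold op
  rw [finsum_eq_single _ e, voa.proj_of_mem e x hx]
  intro d hd
  simp [voa.proj_of_mem_ne d e x hx hd, mcoeff_zero]

lemma mcoeff_eq_zero_of_mem_Omega {W : WeakMod F V M voa} {n : ℤ} {w : M} (hw : w ∈ W.Omega n)
    {d : ℤ} {x : V} (hx : x ∈ voa.deg d) {i : ℤ} (hi : d + n ≤ i) : W.mcoeff x i w = 0 := by
  simp only [Omega, Submodule.mem_iInf, LinearMap.mem_ker] at hw
  exact hw d x hx i hi

/-- The zero mode of `Res_z Y(a,z)b (1+z)^p z^r` is the left-hand side of the Borcherds identity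
for the value of `q` that makes each index the one of a zero mode. -/
lemma op_res (W : WeakMod F V M voa) {da db : ℤ} {a b : V} (ha : a ∈ voa.deg da)
    (hb : b ∈ voa.deg db) (p q r : ℤ) (hq : p + q + r = da + db - 2) (w : M) :
    W.op (voa.res a p b (-r)) w =
      ∑ᶠ i : ℕ, Ring.choose p i • W.mcoeff (voa.coeff a (r + i) b) (p + q - i) w := by
  obtain ⟨N, hN⟩ := voa.trunc a b
  have hfin : (Function.support fun j : ℕ =>
      Ring.choose p j • voa.coeff a ((j : ℤ) - -r) b).Finite := by
    refine (Set.finite_Iio (N - r).toNat).subset fun j hj => ?_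
    by_contra hlt
    refine hj ?_
    have hle : N ≤ (j : ℤ) - -r := by
      simp only [Set.mem_Iio] at hlt
      omega
    change Ring.choose p j • voa.coeff a ((j : ℤ) - -r) b = 0
    rw [hN _ hle, smul_zero]
  change W.opHom w (∑ᶠ j : ℕ, Ring.choose p j • voa.coeff a ((j : ℤ) - -r) b) = _
  rw [(W.opHom w).map_finsum hfin]
  refine finsum_congr fun i => ?_
  rw [map_zsmul, show (i : ℤ) - -r = r + i by ring]
  congr 1
  refine (W.op_of_mem (voa.deg_coeff da db (r + i) a b ha hb) w).trans ?_
  congr 2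
  omega

end WeakMod

/-- the explicit expression for `o(a ∘_{n,t}^s b)` on `Ω_n(M)`
(for `t ≥ s ≥ 0`), and consequently `o(a ∘_{n,t}^s b) = 0` on `Ω_n(M)`. -/
theorem statement7 {F : Type u} {V : Type v} {M : Type w} [Field F] [IsAlgClosed F]
    [AddCommGroup V] [Module F V] [AddCommGroup M] [Module F M]
    (hchar : (2 : F) ≠ 0) (voa : VOA F V) (W : WeakMod F V M voa) (n : ℕ)
    (da db : ℤ) (a b : V) (ha : a ∈ voa.deg da) (hb : b ∈ voa.deg db)
    (s t : ℕ) (hst : s ≤ t) :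
    ∀ w ∈ W.Omega n,
      (W.op (voa.circ a da b n s t) w =
        (∑ᶠ i : ℕ, (Ring.choose (-2 * (n : ℤ) - t - 2) i * (-1 : ℤ) ^ i) •
          W.mcoeff a (da + s - n - 2 - t + i) (W.mcoeff b (db + n - s + i + t) w)) -
        (∑ᶠ i : ℕ,
          (Ring.choose (-2 * (n : ℤ) - t - 2) i * (-1 : ℤ) ^ (2 * n + 2 + t + i)) •
          W.mcoeff b (db - n - s - 2 - i) (W.mcoeff a (da + n + s + i) w))) ∧
      W.op (voa.circ a da b n s t) w = 0 := by
  intro w hw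
  have hA : ∀ i : ℕ, W.mcoeff a (da + n + s + i) w = 0 := fun i =>
    WeakMod.mcoeff_eq_zero_of_mem_Omega hw ha (by omega)
  have hB : ∀ i : ℕ, W.mcoeff b (db + n - s + i + t) w = 0 := fun i =>
    WeakMod.mcoeff_eq_zero_of_mem_Omega hw hb (by omega)
  have hzero : W.op (voa.circ a da b n s t) w = 0 := by
    have hop := W.op_res ha hb (da + n + s) (db + n - s + t) (-(2 * n + 2 + t)) (by ring) w
    rw [neg_neg, W.jacobi] at hop
    refine hop.trans (finsum_eq_zero_of_forall_eq_zero fun i => ?_)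
    rw [hA, show (db + n - s + t + i : ℤ) = db + n - s + i + t by ring, hB]
    simp
  refine ⟨?_, hzero⟩
  rw [hzero]
  simp [hA, hB]
end

section
/- Let V be a vertex operator algebra over an algebraically closed field F with char F ≠ 2, n a nonnegative integer, and M = ⊕_{m≥0} M(m) an irreducible Z_+-graded V-module with M(0) ≠ 0. Then Ω_n(M) = ⊕_{i=0}^n M(i); equivalently, Ω_n(M) ∩ M(i) = 0 for every i > n. -/
/-!
Let `w ∈ M(i)` be a nonzero vector of `Ω_n(M)` with `i > n`. The subspace spanned by the
vectors `u_k w` contains `w = 1_{-1} w` and is a weak submodule (`isSub_cyclic`, by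
associativity), so by irreducibility it is `M`. For `u` homogeneous, `u_k w` has degree
`i + deg u - k - 1`; when this degree is `0` one has `k = deg u + i - 1 ≥ deg u + n`, so
`u_k w = 0`. Hence `M` is spanned by vectors of nonzero degree, which forces `M(0) = 0`, a
contradiction. This gives the second claim (`omega_inf_gr`).

For the first claim, homogeneous vectors of degree at most `n` lie in `Ω_n(M)` since
`u_k` with `k ≥ deg u + n` sends them to negative degree. Conversely `Ω_n(M)` is a graded
subspace: it is cut out by homogeneous operators, which shift all degrees by the same amount
(`component_mem_omega`), so the components of its elements in degrees `> n` vanish.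
-/

/-!
Common definitions: vertex operator algebras over a field `F`, weak modules,
`ℤ₊`-graded modules, the subspaces `O_n(V)`, the products `*_n`, and the
spaces `Ω_n(M)`, following Li Ren, "Modular `A_n(V)` theory".
-/

universe u v w

namespace WeakMod

variable {F : Type u} {V : Type v} {M : Type w} [Field F] [AddCommGroup V] [Module F V]
  [AddCommGroup M] [Module F M] {voa : VOA F V}

/-- The subspace spanned by all `u_k x`, with `u ∈ V` and `k ∈ ℤ`. -/
def cyclic (W : WeakMod F V M voa) (x : M) : Submodule F M :=
  Submodule.span F {y | ∃ (u : V) (k : ℤ), y = W.mcoeff u k x}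

lemma mem_omega (W : WeakMod F V M voa) (n : ℤ) (x : M) :
    x ∈ W.Omega n ↔
      ∀ (d : ℤ) (v : V), v ∈ voa.deg d → ∀ i : ℤ, d + n ≤ i → W.mcoeff v i x = 0 := by
  simp [Omega, Submodule.mem_iInf]

lemma self_mem_cyclic (W : WeakMod F V M voa) (x : M) : x ∈ W.cyclic x :=
  Submodule.subset_span ⟨voa.vac, -1, by simp [W.vac_act]⟩

/-- Weak associativity, as a span statement: `u_s a_t x` is a combination of vectors
`(u_j a)_k x`. With `p = l` large enough that `u_{l+i} x = 0` for all `i ≥ 0`, the second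
family of terms in the Jacobi identity vanishes, and the identity expresses `u_s a_t x`
through such vectors and the vectors `u_{s-i} a_{t+i} x` with `i ≥ 1`, which are treated by
downward induction on `t`. -/
lemma mcoeff_mcoeff_mem_cyclic (W : WeakMod F V M voa) (x : M) (u a : V) (s t : ℤ) :
    W.mcoeff u s (W.mcoeff a t x) ∈ W.cyclic x := by
  obtain ⟨l, hl⟩ := W.trunc u x
  obtain ⟨N, hN⟩ := W.trunc a x
  have key : ∀ (m : ℕ) (t s : ℤ), N - m ≤ t →
      W.mcoeff u s (W.mcoeff a t x) ∈ W.cyclic x := by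
    intro m
    induction m with
    | zero =>
      intro t s ht
      rw [hN t (by simpa using ht), map_zero]
      exact zero_mem _
    | succ m ih =>
      intro t s ht
      have hJ := W.jacobi u a x l t (s - l)
      have hL : (∑ᶠ i : ℕ, Ring.choose l i •
          W.mcoeff (voa.coeff u (s - l + i) a) (l + t - i) x) ∈ W.cyclic x :=
        finsum_induction (· ∈ W.cyclic x) (zero_mem _) (fun _ _ => add_mem)
          fun i => by
            refine zsmul_mem ?_ _
            exact Submodule.subset_span ⟨_, _, rfl⟩
      rw [hJ] at hL
      have hterm : ∀ i : ℕ, ((-1 : ℤ) ^ i * Ring.choose (s - l) i) •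
          (W.mcoeff u (l + (s - l) - i) (W.mcoeff a (t + i) x)
            - ((s - l).negOnePow : ℤ) • W.mcoeff a (t + (s - l) - i) (W.mcoeff u (l + i) x)) =
          ((-1 : ℤ) ^ i * Ring.choose (s - l) i) •
            W.mcoeff u (s - i) (W.mcoeff a (t + i) x) := by
        intro i
        rw [hl (l + i) (by omega), map_zero, smul_zero, sub_zero, add_sub_cancel]
      rw [finsum_congr hterm] at hL
      -- the summands with `t + i ≥ N` vanish, so the sum stops at `(N - t).toNat`
      rw [finsum_eq_sum_of_support_subset (s := Finset.range ((N - t).toNat + 1))] at hL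
      · rw [Finset.sum_range_succ'] at hL
        have hR : (∑ i ∈ Finset.range (N - t).toNat,
            ((-1 : ℤ) ^ (i + 1) * Ring.choose (s - l) (i + 1)) •
              W.mcoeff u (s - (i + 1 : ℕ)) (W.mcoeff a (t + (i + 1 : ℕ)) x)) ∈ W.cyclic x :=
          sum_mem fun i _ => zsmul_mem (ih _ _ (by push_cast at ht ⊢; omega)) _
        have h := (Submodule.add_mem_iff_right _ hR).1 hL
        simpa using h
      · intro i hi
        by_contra hcon
        apply hi
        simp only [Finset.coe_range, Set.mem_Iio, not_lt] at hcon
        simp only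
        rw [hN (t + i) (by omega), map_zero, smul_zero]
  exact key (N - t).toNat t s (by omega)

lemma isSub_cyclic (W : WeakMod F V M voa) (x : M) : W.IsSub (W.cyclic x) := by
  intro v k y hy
  induction hy using Submodule.span_induction with
  | mem y hy =>
    obtain ⟨u, j, rfl⟩ := hy
    exact W.mcoeff_mcoeff_mem_cyclic x v u k j
  | zero => rw [map_zero]; exact zero_mem _
  | add y z _ _ hy hz => rw [map_add]; exact add_mem hy hz
  | smul c y _ hy => rw [map_smul]; exact Submodule.smul_mem _ c hy

end WeakMod

namespace GradedMod

variable {F : Type u} {V : Type v} {M : Type w} [Field F] [AddCommGroup V] [Module F V]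
  [AddCommGroup M] [Module F M] {voa : VOA F V}

/-- Every `v ∈ V` is a sum of homogeneous vectors, so membership of `v_k x` in a subspace
need only be checked for homogeneous `v`. -/
lemma mcoeff_mem_of_homogeneous (GM : GradedMod F V M voa) (x : M) (k : ℤ)
    (P : Submodule F M)
    (h : ∀ (d : ℤ) (v : V), v ∈ voa.deg d → GM.mcoeff v k x ∈ P) (v : V) :
    GM.mcoeff v k x ∈ P := by
  have hv : ∀ a : V, GM.mcoeff a k x ∈ P ↔ a ∈
      P.comap ({ toFun := fun a => GM.mcoeff a k x
                 map_add' := fun a b => by rw [GM.mcoeff_add]; rfl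
                 map_smul' := fun c a => by rw [GM.mcoeff_smul]; rfl } : V →ₗ[F] M) :=
    fun _ => Iff.rfl
  rw [hv, ← voa.proj_sum v]
  exact finsum_induction (· ∈ Submodule.comap _ P) (zero_mem _) (fun _ _ => add_mem)
    fun d => h d _ (voa.proj_mem d v)

theorem omega_inf_gr (GM : GradedMod F V M voa) (hirr : GM.toWeakMod.Irreducible)
    (h0 : GM.gr 0 ≠ ⊥) (n : ℕ) (i : ℤ) (hi : (n : ℤ) < i) :
    GM.toWeakMod.Omega n ⊓ GM.gr i = ⊥ := by
  rw [eq_bot_iff]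
  rintro x ⟨hxO, hxi⟩
  rw [Submodule.mem_bot]
  by_contra hx
  apply h0
  rw [SetLike.mem_coe, WeakMod.mem_omega] at hxO
  have htop : GM.toWeakMod.cyclic x = ⊤ := by
    refine (hirr.2 _ (GM.toWeakMod.isSub_cyclic x)).resolve_left fun hbot => hx ?_
    have := GM.toWeakMod.self_mem_cyclic x
    rwa [hbot, Submodule.mem_bot] at this
  have hle : GM.toWeakMod.cyclic x ≤ ⨆ (j : ℤ) (_ : j ≠ 0), GM.gr j := by
    refine Submodule.span_le.2 ?_
    rintro _ ⟨u, k, rfl⟩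
    refine GM.mcoeff_mem_of_homogeneous x k _ (fun d v hv => ?_) u
    by_cases hk : i + d - k - 1 = 0
    · rw [hxO d v hv k (by omega)]
      exact zero_mem _
    · exact Submodule.mem_iSup_of_mem _
        (Submodule.mem_iSup_of_mem hk (GM.gr_shift d v hv i k x hxi))
  rw [htop, top_le_iff] at hle
  have hdis := GM.internal.submodule_iSupIndep 0
  rwa [hle, disjoint_top] at hdis

/-- `Ω_n(M)` is a graded subspace. -/
lemma component_mem_omega (GM : GradedMod F V M voa) (n : ℤ) (f : ℤ →₀ M)
    (hf : ∀ i, f i ∈ GM.gr i) (hx : (f.sum fun _ y => y) ∈ GM.toWeakMod.Omega n) (j : ℤ) :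
    f j ∈ GM.toWeakMod.Omega n := by
  rw [WeakMod.mem_omega] at hx ⊢
  intro d v hv k hk
  by_cases hj : j ∈ f.support
  swap
  · rw [Finsupp.notMem_support_iff.1 hj, map_zero]
  have hinj : Function.Injective fun i : ℤ => i + d - k - 1 := fun a b h => by
    simp only at h
    omega
  refine (iSupIndep_iff_finsetSum_eq_zero_imp_eq_zero _).1
    (GM.internal.submodule_iSupIndep.comp hinj) f.support (fun i => GM.mcoeff v k (f i))
    (fun i _ => GM.gr_shift d v hv i k _ (hf i)) ?_ j hj
  rw [← map_sum]
  exact hx d v hv k hk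

end GradedMod

/-- Theorem 3.2(4): for an irreducible `ℤ₊`-graded `V`-module `M`
with `M(0) ≠ 0`, one has `Ω_n(M) = ⊕_{i=0}^n M(i)`; equivalently
`Ω_n(M) ∩ M(i) = 0` for `i > n`. -/
theorem statement9 {F : Type u} {V : Type v} {M : Type w} [Field F] [IsAlgClosed F]
    [AddCommGroup V] [Module F V] [AddCommGroup M] [Module F M]
    (hchar : (2 : F) ≠ 0) (voa : VOA F V) (GM : GradedMod F V M voa)
    (hirr : GM.toWeakMod.Irreducible) (h0 : GM.gr 0 ≠ ⊥) (n : ℕ) :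
    GM.toWeakMod.Omega n = (∑ i ∈ Finset.range (n + 1), GM.gr i) ∧
    ∀ i : ℤ, (n : ℤ) < i → GM.toWeakMod.Omega n ⊓ GM.gr i = ⊥ := by
  have h2 := GM.omega_inf_gr hirr h0 n
  refine ⟨le_antisymm (fun x hx => ?_) ?_, h2⟩
  · have hx' : x ∈ iSup GM.gr := by
      rw [GM.internal.submodule_iSup_eq_top]
      trivial
    obtain ⟨f, hf, rfl⟩ := (Submodule.mem_iSup_iff_exists_finsupp _ _).1 hx'
    refine sum_mem fun j _ => ?_
    have hjO := GM.component_mem_omega n f hf hx j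
    rcases lt_or_ge j 0 with hneg | hpos
    · have h := hf j
      rw [GM.gr_neg j hneg, Submodule.mem_bot] at h
      simp only [h, zero_mem]
    rcases lt_or_ge (n : ℤ) j with hlt | hle
    · have h : f j ∈ GM.toWeakMod.Omega n ⊓ GM.gr j := ⟨hjO, hf j⟩
      rw [h2 j hlt, Submodule.mem_bot] at h
      simp only [h, zero_mem]
    · lift j to ℕ using hpos
      exact Finset.single_le_sum_of_canonicallyOrdered (f := fun i : ℕ => GM.gr i)
        (Finset.mem_range.2 (by omega)) (hf j)
  · refine Finset.sum_induction _ (· ≤ GM.toWeakMod.Omega n) (fun a b ha hb => sup_le ha hb)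
      bot_le fun i hi x hx => ?_
    rw [Finset.mem_range] at hi
    rw [WeakMod.mem_omega]
    intro d v hv k hk
    have h := GM.gr_shift d v hv i k x hx
    rwa [GM.gr_neg _ (by omega), Submodule.mem_bot] at h
end

section
/- Let V be a vertex operator algebra over an algebraically closed field F with char F ≠ 2 and let M be a weak V-module generated by a vector w ∈ M. Then M is spanned by the vectors u_k w for u ∈ V and k ∈ Z. In particular, if M is irreducible, then M = span{u_k w | u ∈ V, k ∈ Z} for every nonzero w ∈ M. -/
/-!
Let `S` be the span of the vectors `u_k w`. It contains `w = 1_{-1} w`, so the theorem reduces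
to stability of `S` under all operators `u_m`, i.e. to `u_m (a_q w) ∈ S`
(`WeakMod.mcoeff_mcoeff_mem`). Choose `p` so large that `u_k w = 0` for all `k ≥ p`. In the Jacobi
identity with parameters `p`, `q`, `r = m - p` every term `a_{q+r-i} u_{p+i} w` then vanishes, and
the identity reads
`∑ i, (-1)^i binom(r,i) u_{m-i} a_{q+i} w = ∑ i, binom(p,i) (u_{r+i} a)_{p+q-i} w ∈ S`.
Its `i = 0` term on the left is `u_m a_q w`, while the other terms involve `a_{q'} w` with
`q' > q`. As `a_q w = 0` for large `q`, descending induction on `q` finishes the argument.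
-/

/-!
Common definitions: vertex operator algebras over a field `F`, weak modules,
`ℤ₊`-graded modules, the subspaces `O_n(V)`, the products `*_n`, and the
spaces `Ω_n(M)`, following Li Ren, "Modular `A_n(V)` theory".
-/

universe u v w

namespace WeakMod

variable {F : Type u} {V : Type v} {M : Type w} [Field F] [AddCommGroup V] [Module F V]
  [AddCommGroup M] [Module F M] {voa : VOA F V}

/-- The span of all vectors `u_k w`. -/
def orbitSpan (W : WeakMod F V M voa) (w : M) : Submodule F M :=
  Submodule.span F {x : M | ∃ (u : V) (k : ℤ), x = W.mcoeff u k w}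

theorem mcoeff_mem_orbitSpan (W : WeakMod F V M voa) (w : M) (u : V) (k : ℤ) :
    W.mcoeff u k w ∈ W.orbitSpan w :=
  Submodule.subset_span ⟨u, k, rfl⟩

/-- Products of two modes applied to `w` are linear combinations of single modes applied
to `w`. -/
theorem mcoeff_mcoeff_mem (W : WeakMod F V M voa) (w : M) (u a : V) (m q : ℤ) :
    W.mcoeff u m (W.mcoeff a q w) ∈ W.orbitSpan w := by
  obtain ⟨p, hp⟩ := W.trunc u w
  obtain ⟨Q, hQ⟩ := W.trunc a w
  -- `n` bounds the distance from `q` up to the truncation threshold `Q`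
  suffices H : ∀ (n : ℕ) (q : ℤ), Q - q ≤ n → ∀ m : ℤ,
      W.mcoeff u m (W.mcoeff a q w) ∈ W.orbitSpan w from
    H (Q - q).toNat q (Int.self_le_toNat _) m
  intro n
  induction n with
  | zero =>
    intro q hq m
    rw [hQ q (by push_cast at hq; omega), map_zero]
    exact zero_mem _
  | succ n ih =>
    intro q hq m
    have hJ := W.jacobi u a w p q (m - p)
    have hL : (∑ᶠ i : ℕ, Ring.choose p i •
        W.mcoeff (voa.coeff u (m - p + i) a) (p + q - i) w) ∈ W.orbitSpan w :=
      finsum_induction (· ∈ W.orbitSpan w) (zero_mem _) (fun _ _ => add_mem)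
        (fun _ => zsmul_mem (W.mcoeff_mem_orbitSpan w _ _) _)
    have hR : ∀ i : ℕ, ((-1 : ℤ) ^ i * Ring.choose (m - p) i) •
        (W.mcoeff u (p + (m - p) - i) (W.mcoeff a (q + i) w)
          - ((m - p).negOnePow : ℤ) • W.mcoeff a (q + (m - p) - i) (W.mcoeff u (p + i) w)) =
        ((-1 : ℤ) ^ i * Ring.choose (m - p) i) •
          W.mcoeff u (m - i) (W.mcoeff a (q + i) w) := by
      intro i
      rw [hp (p + i) (by omega), map_zero, smul_zero, sub_zero, add_sub_cancel]
    rw [hJ, finsum_congr hR,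
      finsum_eq_sum_of_support_subset (s := Finset.range (n + 1 + 1)),
      Finset.sum_range_succ'] at hL
    · simp only [Nat.cast_zero, pow_zero, Ring.choose_zero_right, mul_one, one_smul, sub_zero,
        add_zero] at hL
      refine (Submodule.add_mem_iff_right _ (Submodule.sum_mem _ fun i _ => ?_)).1 hL
      exact zsmul_mem (ih _ (by push_cast at hq ⊢; omega) _) _
    · intro i hi
      simp only [Finset.coe_range, Set.mem_Iio]
      by_contra hlt
      refine hi ?_
      simp only
      rw [hQ (q + i) (by push_cast at hq; omega), map_zero, smul_zero]

theorem isSub_orbitSpan (W : WeakMod F V M voa) (w : M) : W.IsSub (W.orbitSpan w) := by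
  intro v k x hx
  refine (Submodule.span_le (p := (W.orbitSpan w).comap (W.mcoeff v k))).2 ?_ hx
  rintro _ ⟨u, j, rfl⟩
  exact W.mcoeff_mcoeff_mem w v u k j

theorem self_mem_orbitSpan (W : WeakMod F V M voa) (w : M) : w ∈ W.orbitSpan w := by
  simpa [W.vac_act] using W.mcoeff_mem_orbitSpan w voa.vac (-1)

end WeakMod

/-- Lemma 2.1: a weak `V`-module generated by `w` is spanned by
`{u_k w | u ∈ V, k ∈ ℤ}`; in particular this holds for any nonzero `w` when `M` is
irreducible. -/
theorem statement12 {F : Type u} {V : Type v} {M : Type w} [Field F] [IsAlgClosed F]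
    [AddCommGroup V] [Module F V] [AddCommGroup M] [Module F M]
    (hchar : (2 : F) ≠ 0) (voa : VOA F V) (W : WeakMod F V M voa) :
    (∀ w : M, (∀ N : Submodule F M, W.IsSub N → w ∈ N → N = ⊤) →
      Submodule.span F {x : M | ∃ (u : V) (k : ℤ), x = W.mcoeff u k w} = ⊤) ∧
    (W.Irreducible → ∀ w : M, w ≠ 0 →
      Submodule.span F {x : M | ∃ (u : V) (k : ℤ), x = W.mcoeff u k w} = ⊤) := by
  refine ⟨fun w hw => hw _ (W.isSub_orbitSpan w) (W.self_mem_orbitSpan w), fun hirr w hw => ?_⟩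
  refine (hirr.2 _ (W.isSub_orbitSpan w)).resolve_left fun h => hw ?_
  have hmem := W.self_mem_orbitSpan w
  rw [show W.orbitSpan w = ⊥ from h] at hmem
  exact (Submodule.mem_bot F).1 hmem
end
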